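/- Let x ∈ R^n be a unit vector. Then x is a leading eigenvector of the matrix M = E[a a^T · 1{|a^T x| > β} · tanh((a^T x)²/α)] for a ~ N(0, I_n), and the eigengap between the eigenvalue at x and any orthogonal direction is at least (β e^{−β²/2}/√(2π))(1 − e^{−β²/α}(α/(2+α))^{3/2}). -/

import Mathlib

open MeasureTheory ProbabilityTheory Real Matrix

/-- The standard Gaussian measure `N(0, I_n)` on `ℝⁿ`. -/
noncomputable def stdGaussian (n : ℕ) : Measure (Fin n → ℝ) :=
  Measure.pi fun _ => gaussianReal 0 1

/-!
For `a ~ N(0, I_n)` and a unit vector `x`, the component `t = aᵀx ~ N(0, 1)` is independent of the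
projection of `a` onto the orthogonal complement of `x`. Hence `E[g(t) a aᵀ]` has eigenvalue
`E[t² g(t)]` at `x` and `E[g(t)]` on that complement, and the eigengap is
`E[(t² - 1) 1{|t| > β} tanh(t² / α)]`. Since `1 - tanh y = e^{-y} / cosh y` and `cosh` is increasing
on `y ≥ 0`, once `t² - 1` is raised to `t² - s` in the error term, the factor `cosh (t² / α)` may
be replaced by its value at `t² = s`. For `s = α / (2 + α)` what remains, `(t² - s) e^{-t² / α}`
against the Gaussian density `φ`, has an elementary antiderivative, and the eigengap is at least
`2 β φ(β) (1 - s e^{-β² / α})`.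
-/

open scoped RealInnerProductSpace

section InnerProductSpace

lemma inner_starProjection_of_mem {E : Type*} [NormedAddCommGroup E] [InnerProductSpace ℝ E]
    {K : Submodule ℝ E} [K.HasOrthogonalProjection] {w : E} (hw : w ∈ K) (a : E) :
    ⟪w, K.starProjection a⟫ = ⟪w, a⟫ := by
  rw [← Submodule.inner_starProjection_left_eq_right, Submodule.starProjection_eq_self_iff.mpr hw]

variable {E : Type*} [NormedAddCommGroup E] [InnerProductSpace ℝ E] [FiniteDimensional ℝ E]
  [MeasurableSpace E] [BorelSpace E]

lemma memLp_two_inner_stdGaussian (u : E) :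
    MemLp (fun a ↦ ⟪u, a⟫) 2 (ProbabilityTheory.stdGaussian E) :=
  (IsGaussian.hasGaussianLaw_id.map (innerSL ℝ u)).memLp_two

lemma integral_inner_stdGaussian (u : E) :
    ∫ a, ⟪u, a⟫ ∂ProbabilityTheory.stdGaussian E = 0 :=
  integral_strongDual_stdGaussian (innerSL ℝ u)

lemma covariance_inner_stdGaussian (u v : E) :
    cov[fun a ↦ ⟪u, a⟫, fun a ↦ ⟪v, a⟫; ProbabilityTheory.stdGaussian E] = ⟪u, v⟫ := by
  rw [← covarianceBilin_apply_eq_cov IsGaussian.memLp_two_id, covarianceBilin_stdGaussian,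
    innerSL_apply_apply]

lemma integral_inner_mul_inner_stdGaussian (u v : E) :
    ∫ a, ⟪u, a⟫ * ⟪v, a⟫ ∂ProbabilityTheory.stdGaussian E = ⟪u, v⟫ := by
  have hcov := covariance_eq_sub (memLp_two_inner_stdGaussian u) (memLp_two_inner_stdGaussian v)
  rw [covariance_inner_stdGaussian, integral_inner_stdGaussian, zero_mul, sub_zero] at hcov
  exact hcov.symm

lemma map_inner_stdGaussian {x : E} (hx : ‖x‖ = 1) :
    (ProbabilityTheory.stdGaussian E).map (fun a ↦ ⟪x, a⟫) = gaussianReal 0 1 := by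
  have hlaw := (IsGaussian.hasGaussianLaw_id (μ := ProbabilityTheory.stdGaussian E)).map
    (innerSL ℝ x)
  have hvar := variance_dual_stdGaussian (innerSL ℝ x)
  rw [innerSL_apply_norm, hx, one_pow] at hvar
  have hmap := hlaw.map_eq_gaussianReal
  rwa [Function.comp_id, integral_strongDual_stdGaussian, hvar, Real.toNNReal_one] at hmap

lemma indepFun_starProjection_orthogonal_stdGaussian (K : Submodule ℝ E) :
    IndepFun K.starProjection Kᗮ.starProjection (ProbabilityTheory.stdGaussian E) := by
  refine HasGaussianLaw.indepFun_of_covariance_inner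
    (IsGaussian.hasGaussianLaw_id.map (K.starProjection.prod Kᗮ.starProjection)) fun u v ↦ ?_
  simp_rw [← Submodule.inner_starProjection_left_eq_right]
  rw [covariance_inner_stdGaussian]
  exact Submodule.inner_right_of_mem_orthogonal (K.starProjection_apply_mem u)
    (Kᗮ.starProjection_apply_mem v)

lemma integrable_inner_mul_inner_mul_stdGaussian {f : E → ℝ} {C : ℝ}
    (hf : AEStronglyMeasurable f (ProbabilityTheory.stdGaussian E)) (hC : ∀ a, |f a| ≤ C)
    (u v : E) :
    Integrable (fun a ↦ ⟪u, a⟫ * ⟪v, a⟫ * f a) (ProbabilityTheory.stdGaussian E) :=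
  ((memLp_two_inner_stdGaussian u).integrable_mul (memLp_two_inner_stdGaussian v)).mul_bdd hf
    (ae_of_all _ hC)

/- Splitting `u = P_K u + P_{Kᗮ} u`, the first part pairs with `a` through `P_K a`, which is
independent of `⟪z, a⟫`, so it contributes `0`. -/
lemma integral_inner_mul_inner_mul_comp_starProjection (K : Submodule ℝ E) {f : E → ℝ} {C : ℝ}
    (hf : Measurable f) (hC : ∀ a, |f a| ≤ C) (u : E) {z : E} (hz : z ∈ Kᗮ) :
    ∫ a, ⟪u, a⟫ * ⟪z, a⟫ * f (K.starProjection a) ∂ProbabilityTheory.stdGaussian E =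
      ⟪u, z⟫ * ∫ a, f (K.starProjection a) ∂ProbabilityTheory.stdGaussian E := by
  set p := K.starProjection u
  set q := Kᗮ.starProjection u
  have hp : p ∈ K := K.starProjection_apply_mem u
  have hq : q ∈ Kᗮ := Kᗮ.starProjection_apply_mem u
  have hu : u = p + q := (K.starProjection_add_starProjection_orthogonal u).symm
  have hindep := (indepFun_starProjection_orthogonal_stdGaussian K).symm
  have hp_integral :
      ∫ a, ⟪p, a⟫ * ⟪z, a⟫ * f (K.starProjection a) ∂ProbabilityTheory.stdGaussian E = 0 := by
    have h := hindep.integral_fun_comp_mul_comp (f := fun b ↦ ⟪z, b⟫) (g := fun b ↦ ⟪p, b⟫ * f b)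
      (by fun_prop) (by fun_prop) (by fun_prop) (by fun_prop)
    simp only [inner_starProjection_of_mem hp, inner_starProjection_of_mem hz,
      integral_inner_stdGaussian, zero_mul] at h
    rw [← h]
    congr with a
    ring
  have hq_integral :
      ∫ a, ⟪q, a⟫ * ⟪z, a⟫ * f (K.starProjection a) ∂ProbabilityTheory.stdGaussian E =
        ⟪q, z⟫ * ∫ a, f (K.starProjection a) ∂ProbabilityTheory.stdGaussian E := by
    have h := hindep.integral_fun_comp_mul_comp (f := fun b ↦ ⟪q, b⟫ * ⟪z, b⟫) (g := f)
      (by fun_prop) (by fun_prop) (by fun_prop) (by fun_prop)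
    simpa only [inner_starProjection_of_mem hq, inner_starProjection_of_mem hz,
      integral_inner_mul_inner_stdGaussian] using h
  have hint (v : E) := integrable_inner_mul_inner_mul_stdGaussian
    (f := fun a ↦ f (K.starProjection a)) (Measurable.aestronglyMeasurable (by fun_prop))
    (fun a ↦ hC _) v z
  have hpz : ⟪p, z⟫ = 0 := Submodule.inner_right_of_mem_orthogonal hp hz
  simp_rw [hu, inner_add_left, add_mul]
  rw [integral_add (hint p) (hint q), hp_integral, hq_integral, hpz, zero_mul]

section UnitVector

variable {x : E} (hx : ‖x‖ = 1) {g : ℝ → ℝ} (hg : Measurable g) {C : ℝ} (hC : ∀ t, |g t| ≤ C)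
include hx hg

lemma integral_comp_inner_stdGaussian :
    ∫ a, g ⟪x, a⟫ ∂ProbabilityTheory.stdGaussian E = ∫ t, g t ∂gaussianReal 0 1 := by
  rw [← map_inner_stdGaussian hx, integral_map (by fun_prop) (by fun_prop)]

include hC

lemma integral_inner_mul_inner_mul_of_orthogonal (u : E) {z : E} (hz : ⟪x, z⟫ = 0) :
    ∫ a, ⟪u, a⟫ * ⟪z, a⟫ * g ⟪x, a⟫ ∂ProbabilityTheory.stdGaussian E =
      ⟪u, z⟫ * ∫ t, g t ∂gaussianReal 0 1 := by
  have h := integral_inner_mul_inner_mul_comp_starProjection (ℝ ∙ x) (f := fun a ↦ g ⟪x, a⟫)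
    (by fun_prop) (fun a ↦ hC _) u (Submodule.mem_orthogonal_singleton_iff_inner_right.mpr hz)
  simpa only [inner_starProjection_of_mem (Submodule.mem_span_singleton_self x),
    integral_comp_inner_stdGaussian hx hg] using h

lemma integral_inner_mul_inner_mul_self (u : E) :
    ∫ a, ⟪u, a⟫ * ⟪x, a⟫ * g ⟪x, a⟫ ∂ProbabilityTheory.stdGaussian E =
      ⟪u, x⟫ * ∫ t, t ^ 2 * g t ∂gaussianReal 0 1 := by
  set w := u - ⟪u, x⟫ • x with hw
  have hxw : ⟪x, w⟫ = 0 := by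
    rw [hw, inner_sub_right, real_inner_smul_right, real_inner_self_eq_norm_sq, hx,
      real_inner_comm]
    ring
  have hint (v : E) := integrable_inner_mul_inner_mul_stdGaussian
    (f := fun a ↦ g ⟪x, a⟫) (Measurable.aestronglyMeasurable (by fun_prop)) (fun a ↦ hC _) x v
  have hsplit (a : E) : ⟪u, a⟫ * ⟪x, a⟫ * g ⟪x, a⟫ =
      ⟪x, a⟫ * ⟪w, a⟫ * g ⟪x, a⟫ + ⟪u, x⟫ * (⟪x, a⟫ * ⟪x, a⟫ * g ⟪x, a⟫) := by
    rw [hw, inner_sub_left, real_inner_smul_left]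
    ring
  simp_rw [hsplit]
  rw [integral_add (hint w) ((hint x).const_mul _), integral_const_mul,
    integral_inner_mul_inner_mul_of_orthogonal hx hg hC x hxw, hxw, zero_mul, zero_add,
    ← integral_comp_inner_stdGaussian hx (by fun_prop)]
  simp_rw [sq]

end UnitVector

end InnerProductSpace

section Matrix

variable {n : ℕ}

/-- The matrix `E[g(aᵀx) a aᵀ]` for `a ~ N(0, I_n)`: the second moment of a standard Gaussian
vector, reweighted by a function `g` of its component along `x`. -/
noncomputable def weightedSecondMoment (x : Fin n → ℝ) (g : ℝ → ℝ) : Matrix (Fin n) (Fin n) ℝ :=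
  Matrix.of fun i j ↦ ∫ a, a i * a j * g (∑ k, a k * x k) ∂stdGaussian n

lemma integral_stdGaussian_comp_toLp (f : EuclideanSpace ℝ (Fin n) → ℝ) :
    ∫ a, f (WithLp.toLp 2 a) ∂stdGaussian n =
      ∫ a, f a ∂ProbabilityTheory.stdGaussian (EuclideanSpace ℝ (Fin n)) := by
  rw [← map_pi_eq_stdGaussian]
  exact (integral_map_equiv (MeasurableEquiv.toLp 2 (Fin n → ℝ)) f).symm

lemma norm_toLp_two_eq_one {x : Fin n → ℝ} (hx : ∑ i, x i ^ 2 = 1) : ‖WithLp.toLp 2 x‖ = 1 := by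
  simp [EuclideanSpace.norm_eq, hx]

lemma weightedSecondMoment_apply (x : Fin n → ℝ) (g : ℝ → ℝ) (i j : Fin n) :
    weightedSecondMoment x g i j =
      ∫ a, ⟪EuclideanSpace.basisFun (Fin n) ℝ i, a⟫ * ⟪EuclideanSpace.basisFun (Fin n) ℝ j, a⟫ *
        g ⟪WithLp.toLp 2 x, a⟫ ∂ProbabilityTheory.stdGaussian (EuclideanSpace ℝ (Fin n)) := by
  rw [← integral_stdGaussian_comp_toLp]
  simp only [weightedSecondMoment, of_apply, EuclideanSpace.basisFun_inner,
    EuclideanSpace.inner_toLp_toLp, dotProduct, star_trivial]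

variable {x : Fin n → ℝ} {g : ℝ → ℝ} (hg : Measurable g) {C : ℝ} (hC : ∀ t, |g t| ≤ C)
include hg hC

lemma weightedSecondMoment_mulVec_apply (z : Fin n → ℝ) (i : Fin n) :
    (weightedSecondMoment x g *ᵥ z) i =
      ∫ a, ⟪EuclideanSpace.basisFun (Fin n) ℝ i, a⟫ * ⟪WithLp.toLp 2 z, a⟫ *
        g ⟪WithLp.toLp 2 x, a⟫ ∂ProbabilityTheory.stdGaussian (EuclideanSpace ℝ (Fin n)) := by
  have hint (j : Fin n) := integrable_inner_mul_inner_mul_stdGaussian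
    (f := fun a : EuclideanSpace ℝ (Fin n) ↦ g ⟪WithLp.toLp 2 x, a⟫)
    (Measurable.aestronglyMeasurable (by fun_prop)) (fun a ↦ hC _)
    (EuclideanSpace.basisFun (Fin n) ℝ i) (EuclideanSpace.basisFun (Fin n) ℝ j)
  simp_rw [mulVec, dotProduct, weightedSecondMoment_apply, ← integral_mul_const]
  rw [← integral_finsetSum _ fun j _ ↦ (hint j).mul_const _]
  congr with a
  have hz : ⟪WithLp.toLp 2 z, a⟫ = ∑ j, z j * ⟪EuclideanSpace.basisFun (Fin n) ℝ j, a⟫ := by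
    simp_rw [EuclideanSpace.basisFun_inner]
    simp only [PiLp.inner_apply, RCLike.inner_apply, conj_trivial, mul_comm]
  rw [hz, Finset.mul_sum, Finset.sum_mul]
  exact Finset.sum_congr rfl fun j _ ↦ by ring

lemma weightedSecondMoment_mulVec_self (hx : ∑ i, x i ^ 2 = 1) :
    weightedSecondMoment x g *ᵥ x = (∫ t, t ^ 2 * g t ∂gaussianReal 0 1) • x := by
  ext i
  rw [weightedSecondMoment_mulVec_apply hg hC,
    integral_inner_mul_inner_mul_self (norm_toLp_two_eq_one hx) hg hC,
    EuclideanSpace.basisFun_inner, Pi.smul_apply, smul_eq_mul, mul_comm]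

lemma weightedSecondMoment_mulVec_of_orthogonal (hx : ∑ i, x i ^ 2 = 1) {z : Fin n → ℝ}
    (hz : ∑ i, x i * z i = 0) :
    weightedSecondMoment x g *ᵥ z = (∫ t, g t ∂gaussianReal 0 1) • z := by
  have hxz : ⟪WithLp.toLp 2 x, WithLp.toLp 2 z⟫ = 0 := by
    simpa [EuclideanSpace.inner_toLp_toLp, dotProduct, mul_comm] using hz
  ext i
  rw [weightedSecondMoment_mulVec_apply hg hC,
    integral_inner_mul_inner_mul_of_orthogonal (norm_toLp_two_eq_one hx) hg hC _ hxz,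
    EuclideanSpace.basisFun_inner, Pi.smul_apply, smul_eq_mul, mul_comm]

end Matrix

section GaussianTail

lemma measurableSet_lt_abs (β : ℝ) : MeasurableSet {t : ℝ | β < |t|} :=
  measurableSet_lt measurable_const (by fun_prop)

lemma setIntegral_lt_abs {β : ℝ} (hβ : 0 ≤ β) (f : ℝ → ℝ) :
    ∫ t in {t | β < |t|}, f |t| = 2 * ∫ t in Set.Ioi β, f t := by
  rw [← integral_indicator (measurableSet_lt_abs β),
    ← Set.inter_eq_right.mpr (Set.Ioi_subset_Ioi hβ), ← setIntegral_indicator measurableSet_Ioi]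
  exact integral_comp_abs (f := (Set.Ioi β).indicator f)

lemma integrable_two_mul_sq_sub_one_mul_exp_neg_mul_sq {b : ℝ} (hb : 0 < b) :
    Integrable fun t : ℝ ↦ (2 * b * t ^ 2 - 1) * exp (-b * t ^ 2) := by
  have hsq := integrable_rpow_mul_exp_neg_mul_sq hb (s := 2) (by norm_num)
  refine ((hsq.const_mul (2 * b)).sub (integrable_exp_neg_mul_sq hb)).congr (ae_of_all _ fun t ↦ ?_)
  simp only [Pi.sub_apply, rpow_two]
  ring

lemma integral_Ioi_two_mul_sq_sub_one_mul_exp_neg_mul_sq {b : ℝ} (hb : 0 < b) (β : ℝ) :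
    ∫ t in Set.Ioi β, (2 * b * t ^ 2 - 1) * exp (-b * t ^ 2) = β * exp (-b * β ^ 2) := by
  have hderiv (t : ℝ) : HasDerivAt (fun t ↦ -(t * exp (-b * t ^ 2)))
      ((2 * b * t ^ 2 - 1) * exp (-b * t ^ 2)) t := by
    have hexp := ((hasDerivAt_pow 2 t).const_mul (-b)).exp
    exact ((hasDerivAt_id t).mul hexp).neg.congr_deriv (by simp only [id]; push_cast; ring)
  have hint := (integrable_two_mul_sq_sub_one_mul_exp_neg_mul_sq hb).integrableOn (s := Set.Ioi β)
  have hlim := tendsto_zero_of_hasDerivAt_of_integrableOn_Ioi (fun t _ ↦ hderiv t) hint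
    (integrable_mul_exp_neg_mul_sq hb).neg.integrableOn
  rw [integral_Ioi_of_hasDerivAt_of_tendsto' (fun t _ ↦ hderiv t) hint hlim, zero_sub, neg_neg]

lemma gaussianPDFReal_zero_one (t : ℝ) :
    gaussianPDFReal 0 1 t = exp (-t ^ 2 / 2) / √(2 * π) := by
  simp [gaussianPDFReal, div_eq_inv_mul]

lemma integrable_sq_gaussianReal (μ : ℝ) (v : NNReal) :
    Integrable (fun t ↦ t ^ 2) (gaussianReal μ v) :=
  (memLp_id_gaussianReal 2).integrable_sq

lemma setIntegral_gaussianReal_eq_setIntegral_smul {E : Type*} [NormedAddCommGroup E]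
    [NormedSpace ℝ E] {μ : ℝ} {v : NNReal} (hv : v ≠ 0) {s : Set ℝ} (hs : MeasurableSet s)
    (f : ℝ → E) :
    ∫ t in s, f t ∂gaussianReal μ v = ∫ t in s, gaussianPDFReal μ v t • f t := by
  rw [← integral_indicator hs, integral_gaussianReal_eq_integral_smul hv, ← integral_indicator hs]
  simp_rw [Set.indicator_smul]

lemma setIntegral_lt_abs_gaussianReal {β c : ℝ} (hβ : 0 ≤ β) (hc : -(1 / 2) < c) :
    ∫ t in {t | β < |t|}, ((1 + 2 * c) * t ^ 2 - 1) * exp (-c * t ^ 2) ∂gaussianReal 0 1 =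
      2 * β * gaussianPDFReal 0 1 β * exp (-c * β ^ 2) := by
  have hexp (t : ℝ) : exp (-(1 / 2 + c) * t ^ 2) = exp (-t ^ 2 / 2) * exp (-c * t ^ 2) := by
    rw [← exp_add]
    ring_nf
  have hpdf (t : ℝ) : gaussianPDFReal 0 1 t • (((1 + 2 * c) * t ^ 2 - 1) * exp (-c * t ^ 2)) =
      (√(2 * π))⁻¹ * ((2 * (1 / 2 + c) * |t| ^ 2 - 1) * exp (-(1 / 2 + c) * |t| ^ 2)) := by
    rw [sq_abs, hexp, gaussianPDFReal_zero_one, smul_eq_mul]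
    ring
  rw [setIntegral_gaussianReal_eq_setIntegral_smul one_ne_zero (measurableSet_lt_abs β)]
  simp_rw [hpdf]
  rw [integral_const_mul, setIntegral_lt_abs hβ
    (fun t ↦ (2 * (1 / 2 + c) * t ^ 2 - 1) * exp (-(1 / 2 + c) * t ^ 2)),
    integral_Ioi_two_mul_sq_sub_one_mul_exp_neg_mul_sq (by linarith), hexp,
    gaussianPDFReal_zero_one]
  ring

lemma setIntegral_lt_abs_sq_sub_mul_exp_neg_sq_div {α β : ℝ} (hα : 0 < α) (hβ : 0 ≤ β) :
    ∫ t in {t | β < |t|}, (t ^ 2 - α / (2 + α)) * exp (-(t ^ 2 / α)) ∂gaussianReal 0 1 =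
      α / (2 + α) * (2 * β * gaussianPDFReal 0 1 β * exp (-β ^ 2 / α)) := by
  have hc : -(1 / 2) < 1 / α := by linarith [one_div_pos.mpr hα]
  have hpoly (t : ℝ) : t ^ 2 - α / (2 + α) = α / (2 + α) * ((1 + 2 * (1 / α)) * t ^ 2 - 1) := by
    field_simp
    ring
  have hexponent (t : ℝ) : -(t ^ 2 / α) = -(1 / α) * t ^ 2 := by ring
  simp_rw [hpoly, mul_assoc (α / (2 + α)), integral_const_mul, hexponent]
  rw [setIntegral_lt_abs_gaussianReal hβ hc, ← hexponent, ← neg_div]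

end GaussianTail

section Tanh

lemma div_two_add_self_le_one {α : ℝ} (hα : 0 ≤ α) : α / (2 + α) ≤ 1 :=
  div_le_one_of_le₀ (by linarith) (by linarith)

lemma exp_neg_sq_div_le_one {α : ℝ} (hα : 0 ≤ α) (β : ℝ) : exp (-β ^ 2 / α) ≤ 1 :=
  exp_le_one_iff.mpr (div_nonpos_of_nonpos_of_nonneg (neg_nonpos.mpr (sq_nonneg β)) hα)

lemma one_sub_tanh (y : ℝ) : 1 - tanh y = exp (-y) / cosh y := by
  rw [tanh_eq_sinh_div_cosh, ← cosh_sub_sinh, sub_div, div_self (cosh_pos y).ne']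

lemma sub_mul_inv_cosh_le {y y₀ : ℝ} (hy : 0 ≤ y) (hy₀ : 0 ≤ y₀) :
    (y - y₀) * (cosh y)⁻¹ ≤ (y - y₀) * (cosh y₀)⁻¹ := by
  have hanti : AntitoneOn (fun y ↦ (cosh y)⁻¹) (Set.Ici 0) :=
    fun a ha b hb hab ↦ inv_anti₀ (cosh_pos a) (cosh_strictMonoOn.monotoneOn ha hb hab)
  rcases le_total y y₀ with h | h
  · exact mul_le_mul_of_nonpos_left (hanti hy hy₀ h) (sub_nonpos.mpr h)
  · exact mul_le_mul_of_nonneg_left (hanti hy₀ hy h) (sub_nonneg.mpr h)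

/- Passing from `t² - 1` to `t² - s` is what allows `cosh (t² / α)` to be frozen at `t² = s`: the
other factor now changes sign exactly there. -/
lemma sq_sub_one_sub_mul_exp_le_sq_sub_one_mul_tanh {α s : ℝ} (hα : 0 < α)
    (hs₀ : 0 ≤ s) (hs₁ : s ≤ 1) (t : ℝ) :
    t ^ 2 - 1 - (cosh (s / α))⁻¹ * ((t ^ 2 - s) * exp (-(t ^ 2 / α))) ≤
      (t ^ 2 - 1) * tanh (t ^ 2 / α) := by
  have hfreeze : (t ^ 2 - s) * (cosh (t ^ 2 / α))⁻¹ ≤ (t ^ 2 - s) * (cosh (s / α))⁻¹ := by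
    have h := mul_le_mul_of_nonneg_left
      (sub_mul_inv_cosh_le (div_nonneg (sq_nonneg t) hα.le) (div_nonneg hs₀ hα.le)) hα.le
    simpa only [← mul_assoc, mul_sub, mul_div_cancel₀ _ hα.ne'] using h
  have hcosh : (t ^ 2 - 1) * (cosh (t ^ 2 / α))⁻¹ ≤ (cosh (s / α))⁻¹ * (t ^ 2 - s) := by
    have hsub := mul_le_mul_of_nonneg_right (sub_le_sub_left hs₁ (t ^ 2))
      (inv_pos.mpr (cosh_pos (t ^ 2 / α))).le
    linarith
  calc t ^ 2 - 1 - (cosh (s / α))⁻¹ * ((t ^ 2 - s) * exp (-(t ^ 2 / α)))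
      = t ^ 2 - 1 - (cosh (s / α))⁻¹ * (t ^ 2 - s) * exp (-(t ^ 2 / α)) := by ring
    _ ≤ t ^ 2 - 1 - (t ^ 2 - 1) * (cosh (t ^ 2 / α))⁻¹ * exp (-(t ^ 2 / α)) := by gcongr
    _ = (t ^ 2 - 1) * (1 - exp (-(t ^ 2 / α)) / cosh (t ^ 2 / α)) := by ring
    _ = (t ^ 2 - 1) * tanh (t ^ 2 / α) := by rw [← one_sub_tanh, sub_sub_cancel]

/-- The weight `1{|t| > β} tanh(t² / α)` applied to the component `t = aᵀx`. -/
noncomputable def truncatedTanh (α β : ℝ) : ℝ → ℝ :=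
  {t | β < |t|}.indicator fun t ↦ tanh (t ^ 2 / α)

lemma measurable_tanh : Measurable tanh := by
  simp_rw [funext tanh_eq_sinh_div_cosh]
  fun_prop

lemma measurable_truncatedTanh (α β : ℝ) : Measurable (truncatedTanh α β) :=
  (measurable_tanh.comp (by fun_prop)).indicator (measurableSet_lt_abs β)

lemma abs_truncatedTanh_le_one (α β t : ℝ) : |truncatedTanh α β t| ≤ 1 :=
  (norm_indicator_le_norm_self (fun t ↦ tanh (t ^ 2 / α)) t).trans (abs_tanh_lt_one _).le

lemma integrable_truncatedTanh (α β : ℝ) (μ : Measure ℝ) [IsFiniteMeasure μ] :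
    Integrable (truncatedTanh α β) μ :=
  (integrable_const 1).mono' (measurable_truncatedTanh α β).aestronglyMeasurable
    (ae_of_all _ (abs_truncatedTanh_le_one α β))

lemma integral_sq_mul_truncatedTanh_sub_integral_truncatedTanh (α β : ℝ) :
    ∫ t, t ^ 2 * truncatedTanh α β t ∂gaussianReal 0 1 -
        ∫ t, truncatedTanh α β t ∂gaussianReal 0 1 =
      ∫ t in {t | β < |t|}, (t ^ 2 - 1) * tanh (t ^ 2 / α) ∂gaussianReal 0 1 := by
  have hsq : Integrable (fun t ↦ t ^ 2 * truncatedTanh α β t) (gaussianReal 0 1) :=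
    (integrable_sq_gaussianReal 0 1).mul_bdd (measurable_truncatedTanh α β).aestronglyMeasurable
      (ae_of_all _ (abs_truncatedTanh_le_one α β))
  rw [← integral_sub hsq (integrable_truncatedTanh α β _),
    ← integral_indicator (measurableSet_lt_abs β)]
  congr with t
  rw [← sub_one_mul, truncatedTanh, Set.indicator_mul_right]

lemma mul_gaussianPDFReal_le_setIntegral_sq_sub_one_mul_tanh {α β : ℝ} (hα : 0 < α)
    (hβ : 0 ≤ β) :
    2 * β * gaussianPDFReal 0 1 β * (1 - α / (2 + α) * exp (-β ^ 2 / α)) ≤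
      ∫ t in {t | β < |t|}, (t ^ 2 - 1) * tanh (t ^ 2 / α) ∂gaussianReal 0 1 := by
  set s := α / (2 + α)
  set A := 2 * β * gaussianPDFReal 0 1 β
  set r := (cosh (s / α))⁻¹
  have hs₀ : 0 ≤ s := by positivity
  have hs₁ : s ≤ 1 := div_two_add_self_le_one hα.le
  have hA : 0 ≤ A := mul_nonneg (by positivity) (gaussianPDFReal_nonneg 0 1 β)
  have hr : r ≤ 1 := inv_le_one_of_one_le₀ (one_le_cosh _)
  have hpoly (c : ℝ) : Integrable (fun t ↦ t ^ 2 - c) (gaussianReal 0 1) :=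
    (integrable_sq_gaussianReal 0 1).sub (integrable_const c)
  have hpoly_exp : Integrable (fun t ↦ (t ^ 2 - s) * exp (-(t ^ 2 / α))) (gaussianReal 0 1) :=
    (hpoly s).mul_bdd (c := 1) (by fun_prop) (ae_of_all _ fun t ↦ by
      rw [norm_of_nonneg (exp_nonneg _), ← neg_div]
      exact exp_neg_sq_div_le_one hα.le t)
  have hpoly_tanh : Integrable (fun t ↦ (t ^ 2 - 1) * tanh (t ^ 2 / α)) (gaussianReal 0 1) :=
    (hpoly 1).mul_bdd (measurable_tanh.comp (by fun_prop)).aestronglyMeasurable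
      (ae_of_all _ fun t ↦ (abs_tanh_lt_one _).le)
  have hintegral_poly : ∫ t in {t | β < |t|}, (t ^ 2 - 1) ∂gaussianReal 0 1 = A := by
    simpa using setIntegral_lt_abs_gaussianReal hβ (c := 0) (by norm_num)
  calc A * (1 - s * exp (-β ^ 2 / α))
      ≤ A - r * (s * (A * exp (-β ^ 2 / α))) := by
        linarith [mul_le_of_le_one_left (by positivity : 0 ≤ s * (A * exp (-β ^ 2 / α))) hr]
    _ = ∫ t in {t | β < |t|}, (t ^ 2 - 1 - r * ((t ^ 2 - s) * exp (-(t ^ 2 / α))))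
          ∂gaussianReal 0 1 := by
        rw [integral_sub (hpoly 1).integrableOn (hpoly_exp.const_mul r).integrableOn,
          integral_const_mul, hintegral_poly,
          setIntegral_lt_abs_sq_sub_mul_exp_neg_sq_div hα hβ]
    _ ≤ ∫ t in {t | β < |t|}, (t ^ 2 - 1) * tanh (t ^ 2 / α) ∂gaussianReal 0 1 :=
        setIntegral_mono ((hpoly 1).sub (hpoly_exp.const_mul r)).integrableOn
          hpoly_tanh.integrableOn (sq_sub_one_sub_mul_exp_le_sq_sub_one_mul_tanh hα hs₀ hs₁)

lemma one_sub_mul_rpow_le_two_mul_one_sub_mul {s q : ℝ} (hs₀ : 0 ≤ s) (hs₁ : s ≤ 1)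
    (hq₀ : 0 ≤ q) (hq₁ : q ≤ 1) :
    1 - q * s ^ ((3 : ℝ) / 2) ≤ 2 * (1 - s * q) := by
  obtain ⟨r, hr₀, rfl⟩ : ∃ r, 0 ≤ r ∧ r ^ 2 = s := ⟨√s, sqrt_nonneg s, sq_sqrt hs₀⟩
  have hr₁ : r ≤ 1 := (sq_le_one_iff₀ hr₀).mp hs₁
  have hrpow : (r ^ 2) ^ ((3 : ℝ) / 2) = r ^ 3 := by
    rw [← rpow_natCast r 2, ← rpow_mul hr₀, ← rpow_natCast r 3]
    norm_num
  have hfactor : 0 ≤ (1 - r) * (1 + r * (1 - r)) := by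
    have := sub_nonneg.mpr hr₁
    positivity
  rw [hrpow]
  linarith [mul_nonneg hq₀ hfactor]

lemma integral_truncatedTanh_le_integral_sq_mul_truncatedTanh {α β : ℝ} (hα : 0 < α)
    (hβ : 0 ≤ β) :
    ∫ t, truncatedTanh α β t ∂gaussianReal 0 1 ≤
      ∫ t, t ^ 2 * truncatedTanh α β t ∂gaussianReal 0 1 := by
  rw [← sub_nonneg, integral_sq_mul_truncatedTanh_sub_integral_truncatedTanh]
  refine le_trans (mul_nonneg ?_ ?_) (mul_gaussianPDFReal_le_setIntegral_sq_sub_one_mul_tanh hα hβ)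
  · exact mul_nonneg (by positivity) (gaussianPDFReal_nonneg 0 1 β)
  · exact sub_nonneg.mpr (mul_le_one₀ (div_two_add_self_le_one hα.le) (exp_nonneg _)
      (exp_neg_sq_div_le_one hα.le β))

lemma mul_gaussianPDFReal_le_integral_sq_mul_truncatedTanh_sub {α β : ℝ} (hα : 0 < α)
    (hβ : 0 ≤ β) :
    β * gaussianPDFReal 0 1 β * (1 - exp (-β ^ 2 / α) * (α / (2 + α)) ^ ((3 : ℝ) / 2)) ≤
      ∫ t, t ^ 2 * truncatedTanh α β t ∂gaussianReal 0 1 -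
        ∫ t, truncatedTanh α β t ∂gaussianReal 0 1 := by
  rw [integral_sq_mul_truncatedTanh_sub_integral_truncatedTanh]
  have hscalar := one_sub_mul_rpow_le_two_mul_one_sub_mul (by positivity)
    (div_two_add_self_le_one hα.le) (exp_nonneg (-β ^ 2 / α)) (exp_neg_sq_div_le_one hα.le β)
  calc β * gaussianPDFReal 0 1 β * (1 - exp (-β ^ 2 / α) * (α / (2 + α)) ^ ((3 : ℝ) / 2))
      ≤ β * gaussianPDFReal 0 1 β * (2 * (1 - α / (2 + α) * exp (-β ^ 2 / α))) :=
        mul_le_mul_of_nonneg_left hscalar (mul_nonneg hβ (gaussianPDFReal_nonneg 0 1 β))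
    _ = 2 * β * gaussianPDFReal 0 1 β * (1 - α / (2 + α) * exp (-β ^ 2 / α)) := by ring
    _ ≤ _ := mul_gaussianPDFReal_le_setIntegral_sq_sub_one_mul_tanh hα hβ

end Tanh

/-- Let `x` be a unit vector and `M = E[a aᵀ · 1{|aᵀx| > β} · tanh((aᵀx)²/α)]` for
`a ~ N(0, I_n)`. Then `x` is a leading eigenvector of `M`: `x` is an eigenvector with
eigenvalue `λ₁`, every vector orthogonal to `x` is an eigenvector with a common eigenvalue
`λ₂ ≤ λ₁`, and the eigengap satisfies
`λ₁ − λ₂ ≥ (β e^{−β²/2}/√(2π))(1 − e^{−β²/α}(α/(2+α))^{3/2})`. -/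
theorem tanh_spectral_leading_eigenvector (n : ℕ) (x : Fin n → ℝ)
    (hx : ∑ i, x i ^ 2 = 1) (α β : ℝ) (hα : 0 < α) (hβ : 0 < β) :
    ∃ lam₁ lam₂ : ℝ,
      (Matrix.of fun i j =>
          ∫ a, a i * a j * (if β < |∑ k, a k * x k| then (1 : ℝ) else 0) *
            Real.tanh ((∑ k, a k * x k) ^ 2 / α) ∂(stdGaussian n)).mulVec x
        = lam₁ • x ∧
      (∀ z : Fin n → ℝ, (∑ i, x i * z i) = 0 →
        (Matrix.of fun i j =>
            ∫ a, a i * a j * (if β < |∑ k, a k * x k| then (1 : ℝ) else 0) *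
              Real.tanh ((∑ k, a k * x k) ^ 2 / α) ∂(stdGaussian n)).mulVec z
          = lam₂ • z) ∧
      lam₂ ≤ lam₁ ∧
      lam₁ - lam₂ ≥ (β * Real.exp (-β ^ 2 / 2) / Real.sqrt (2 * π)) *
        (1 - Real.exp (-β ^ 2 / α) * (α / (2 + α)) ^ ((3 : ℝ) / 2)) := by
  have hM : (Matrix.of fun i j ↦
      ∫ a, a i * a j * (if β < |∑ k, a k * x k| then (1 : ℝ) else 0) *
        Real.tanh ((∑ k, a k * x k) ^ 2 / α) ∂(stdGaussian n)) =
      weightedSecondMoment x (truncatedTanh α β) := by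
    ext i j
    simp only [weightedSecondMoment, truncatedTanh, of_apply, Set.indicator_apply,
      Set.mem_ofPred_eq, mul_assoc, ite_mul, one_mul, zero_mul]
  have hw := measurable_truncatedTanh α β
  have hw_le := abs_truncatedTanh_le_one α β
  rw [hM, mul_div_assoc, ← gaussianPDFReal_zero_one]
  exact ⟨∫ t, t ^ 2 * truncatedTanh α β t ∂gaussianReal 0 1,
    ∫ t, truncatedTanh α β t ∂gaussianReal 0 1,
    weightedSecondMoment_mulVec_self hw hw_le hx,
    fun _ hz ↦ weightedSecondMoment_mulVec_of_orthogonal hw hw_le hx hz,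
    integral_truncatedTanh_le_integral_sq_mul_truncatedTanh hα hβ.le,
    mul_gaussianPDFReal_le_integral_sq_mul_truncatedTanh_sub hα hβ.le⟩
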